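/- Let f : ℝ → ℝ be continuously differentiable and convex, let α ∈ (0,1), and let x, c ∈ ℝ with x ≠ c. Then D^α_c f(x) ≤ f′(x)(x−c)/(Γ(2−α)·|x−c|^α). -/

import Mathlib

/-- The Caputo fractional derivative of order `α ∈ (0,1)` with terminal `c`. -/
noncomputable def caputo (α c : ℝ) (f : ℝ → ℝ) (x : ℝ) : ℝ :=
  (1 / Real.Gamma (1 - α)) * ∫ t in c..x, deriv f t / |x - t| ^ α

/-!
Convexity makes `f'` monotone, so replacing `f' t` by its value at the endpoint `x` can only
increase the signed integral from `c` to `x` against the nonnegative weight `|x - t| ^ (-α)`,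
whichever of `c` and `x` is larger. The weight itself integrates to
`(x - c) * |x - c| ^ (-α) / (1 - α)`, and `(1 - α) * Γ(1 - α) = Γ(2 - α)`.
-/

open MeasureTheory Set
open scoped Interval

section MonotoneWeighted

variable {μ : Measure ℝ} {g w : ℝ → ℝ} {a b : ℝ}

lemma intervalIntegrable_mul_of_monotoneOn (hg : MonotoneOn g [[a, b]])
    (hw : IntervalIntegrable w μ a b) : IntervalIntegrable (fun t ↦ g t * w t) μ a b := by
  have hg_bdd : MemLp g ⊤ (μ.restrict [[a, b]]) :=
    hg.memLp_top (isLeast_Icc inf_le_sup) (isGreatest_Icc inf_le_sup) measurableSet_uIcc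
  rw [intervalIntegrable_iff] at hw ⊢
  exact hw.mul_of_top_right (hg_bdd.mono_measure (Measure.restrict_mono_set μ uIoc_subset_uIcc))

lemma intervalIntegral_mul_le_of_monotoneOn (hg : MonotoneOn g [[a, b]])
    (hw : IntervalIntegrable w μ a b) (hw_nonneg : ∀ t ∈ [[a, b]], 0 ≤ w t) :
    ∫ t in a..b, g t * w t ∂μ ≤ g b * ∫ t in a..b, w t ∂μ := by
  have hgw := intervalIntegrable_mul_of_monotoneOn hg hw
  rw [← intervalIntegral.integral_const_mul]
  rcases le_total a b with hab | hba
  · refine intervalIntegral.integral_mono_on hab hgw (hw.const_mul _) fun t ht ↦ ?_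
    rw [← uIcc_of_le hab] at ht
    exact mul_le_mul_of_nonneg_right
      (hg ht right_mem_uIcc (uIcc_of_le hab ▸ ht).2) (hw_nonneg t ht)
  · rw [intervalIntegral.integral_symm b a, intervalIntegral.integral_symm b a, neg_le_neg_iff]
    refine intervalIntegral.integral_mono_on hba (hw.const_mul _).symm hgw.symm fun t ht ↦ ?_
    rw [← uIcc_of_ge hba] at ht
    exact mul_le_mul_of_nonneg_right
      (hg right_mem_uIcc ht (uIcc_of_ge hba ▸ ht).1) (hw_nonneg t ht)

end MonotoneWeighted

section PowerKernel

variable {r : ℝ}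

lemma intervalIntegrable_abs_rpow (hr : -1 < r) (a b : ℝ) :
    IntervalIntegrable (fun u : ℝ ↦ |u| ^ r) volume a b := by
  refine intervalIntegrable_of_even (fun u ↦ by rw [abs_neg]) fun x hx ↦ ?_
  refine (intervalIntegral.intervalIntegrable_rpow' hr).congr fun u hu ↦ ?_
  rw [uIoc_of_le hx.le] at hu
  simp only [abs_of_pos hu.1]

lemma intervalIntegrable_abs_sub_rpow (hr : -1 < r) (c x : ℝ) :
    IntervalIntegrable (fun t ↦ |x - t| ^ r) volume c x := by
  simpa only [sub_sub_cancel] using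
    (intervalIntegrable_abs_rpow hr (x - c) (x - x)).comp_sub_left x

lemma integral_abs_rpow_of_nonneg (hr : -1 < r) {a : ℝ} (ha : 0 ≤ a) :
    ∫ u in (0 : ℝ)..a, |u| ^ r = a * |a| ^ r / (r + 1) := by
  have h_abs : ∫ u in (0 : ℝ)..a, |u| ^ r = ∫ u in (0 : ℝ)..a, u ^ r :=
    intervalIntegral.integral_congr fun u hu ↦ by
      rw [uIcc_of_le ha] at hu
      simp only [abs_of_nonneg hu.1]
  have hr' : r + 1 ≠ 0 := by linarith
  rw [h_abs, integral_rpow (Or.inl hr), Real.zero_rpow hr', sub_zero, abs_of_nonneg ha,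
    Real.rpow_add_one' ha hr', mul_comm]

lemma integral_abs_rpow (hr : -1 < r) (a : ℝ) :
    ∫ u in (0 : ℝ)..a, |u| ^ r = a * |a| ^ r / (r + 1) := by
  rcases le_total 0 a with ha | ha
  · exact integral_abs_rpow_of_nonneg hr ha
  · calc ∫ u in (0 : ℝ)..a, |u| ^ r
        = -∫ u in (0 : ℝ)..-a, |u| ^ r := by
          rw [← intervalIntegral.integral_symm, ← neg_zero,
            ← intervalIntegral.integral_comp_neg (fun u : ℝ ↦ |u| ^ r)]
          simp only [abs_neg, neg_zero]
      _ = a * |a| ^ r / (r + 1) := by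
          rw [integral_abs_rpow_of_nonneg hr (neg_nonneg.2 ha), abs_neg]
          ring

lemma integral_abs_sub_rpow (hr : -1 < r) (c x : ℝ) :
    ∫ t in c..x, |x - t| ^ r = (x - c) * |x - c| ^ r / (r + 1) := by
  rw [intervalIntegral.integral_comp_sub_left (fun u ↦ |u| ^ r), sub_self,
    integral_abs_rpow hr]

end PowerKernel

theorem caputo_le_of_convex_general {f : ℝ → ℝ} {α x c : ℝ} (hconv : ConvexOn ℝ [[c, x]] f)
    (hf : ∀ t ∈ [[c, x]], DifferentiableAt ℝ f t) (hα : α < 1) (hxc : x ≠ c) :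
    caputo α c f x ≤ deriv f x * (x - c) / (Real.Gamma (2 - α) * |x - c| ^ α) := by
  have hr : -1 < -α := neg_lt_neg hα
  have hα' : 0 < 1 - α := sub_pos.2 hα
  have hΓ_pos : 0 < Real.Gamma (1 - α) := Real.Gamma_pos_of_pos hα'
  have hΓ : Real.Gamma (2 - α) = (1 - α) * Real.Gamma (1 - α) := by
    rw [← Real.Gamma_add_one hα'.ne']
    ring_nf
  have h_dist : |x - c| ^ α ≠ 0 := (Real.rpow_pos_of_pos (abs_pos.2 (sub_ne_zero.2 hxc)) α).ne'
  calc caputo α c f x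
      = 1 / Real.Gamma (1 - α) * ∫ t in c..x, deriv f t * |x - t| ^ (-α) := by
        simp only [caputo, Real.rpow_neg (abs_nonneg _), div_eq_mul_inv]
    _ ≤ 1 / Real.Gamma (1 - α) * (deriv f x * ∫ t in c..x, |x - t| ^ (-α)) := by
        refine mul_le_mul_of_nonneg_left ?_ (one_div_pos.2 hΓ_pos).le
        exact intervalIntegral_mul_le_of_monotoneOn (hconv.monotoneOn_deriv hf)
          (intervalIntegrable_abs_sub_rpow hr c x) fun t _ ↦ by positivity
    _ = deriv f x * (x - c) / (Real.Gamma (2 - α) * |x - c| ^ α) := by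
        rw [integral_abs_sub_rpow hr, hΓ, Real.rpow_neg (abs_nonneg _), neg_add_eq_sub,
          eq_div_iff (mul_ne_zero (mul_pos hα' hΓ_pos).ne' h_dist)]
        field_simp

/-- for convex continuously differentiable `f`, the Caputo derivative is
bounded above by the corresponding first-derivative expression. -/
theorem caputo_le_of_convex (f : ℝ → ℝ) (hf : ContDiff ℝ 1 f)
    (hconv : ConvexOn ℝ Set.univ f) (α : ℝ) (hα : α ∈ Set.Ioo (0 : ℝ) 1)
    (x c : ℝ) (hxc : x ≠ c) :
    caputo α c f x ≤ deriv f x * (x - c) / (Real.Gamma (2 - α) * |x - c| ^ α) :=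
  caputo_le_of_convex_general (hconv.subset (subset_univ _) (convex_uIcc c x))
    (fun t _ ↦ hf.differentiable one_ne_zero t) hα.2 hxc
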